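/- arXiv:1504.06832 — 2 statements merged into one kernel-verified Lean document; each statement's English description precedes it below -/
import Mathlib

section
/- For every pair of points a < b in the double q-lattice Λ and every integer n ≥ 1, one has b^n − a^n = (1 − q^n) · Σ_{c ∈ I(a,b)} |c| c^{n−1}, where the sum over the interval I(a,b) (which is an infinite set when a < 0 < b) converges absolutely. -/
open scoped BigOperators
open Classical

noncomputable section

/-- The double q-lattice Λ = {ζ₋ qᵐ} ∪ {ζ₊ qⁿ}. -/
def Lambda (q zm zp : ℝ) : Set ℝ :=
  {x | ∃ m : ℤ, x = zm * q ^ m} ∪ {x | ∃ n : ℤ, x = zp * q ^ n}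

/-- The interval I(a,b) of the double q-lattice: [a,b)∩Λ if a<b<0, [a,b]∩Λ if a<0<b,
(a,b]∩Λ if 0<a<b. -/
def qInterval (q zm zp a b : ℝ) : Set ℝ :=
  if b < 0 then Set.Ico a b ∩ Lambda q zm zp
  else if a < 0 then Set.Icc a b ∩ Lambda q zm zp
  else Set.Ioc a b ∩ Lambda q zm zp

/-!
For `x ∈ Λ` the lattice points between `0` and `x` form the ray `x, xq, xq², …`, over which
`∑ cⁿ = xⁿ / (1 - qⁿ)` is a geometric series. Whatever the signs of `a` and `b`, the weight `|c|`
on `I(a,b)` is the weight `c` on the ray of `b` minus the weight `c` on the ray of `a`: this is the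
rule `∫ₐᵇ = ∫₀ᵇ - ∫₀ᵃ` for the Jackson integral.
-/

/-- The geometric ray `{x, xq, xq², …}`, the support of the Jackson integral from `0` to `x`. -/
def qRay (q x : ℝ) : Set ℝ :=
  Set.range fun i : ℕ => x * q ^ i

section

variable {q zm zp a b c x : ℝ}

lemma qRay_mul_zpow (hq : q ≠ 0) (z : ℝ) (m : ℤ) :
    qRay q (z * q ^ m) = (fun k : ℤ => z * q ^ k) '' Set.Ici m := by
  have exponent_shift (i : ℕ) : z * q ^ m * q ^ i = z * q ^ (m + i) := by
    rw [zpow_add₀ hq, zpow_natCast, mul_assoc]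
  ext c
  simp only [qRay, Set.mem_range, Set.mem_image, Set.mem_Ici, exponent_shift]
  constructor
  · rintro ⟨i, rfl⟩
    exact ⟨m + i, Int.le_add_of_nonneg_right i.cast_nonneg, rfl⟩
  · rintro ⟨k, hmk, rfl⟩
    obtain ⟨i, rfl⟩ := Int.le.dest hmk
    exact ⟨i, rfl⟩

lemma neg_mem_qRay_neg_iff : -c ∈ qRay q (-x) ↔ c ∈ qRay q x := by
  simp only [qRay, Set.mem_range, neg_mul, neg_inj]

lemma neg_mem_Lambda_neg_iff : -x ∈ Lambda q (-zp) (-zm) ↔ x ∈ Lambda q zm zp := by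
  simp only [Lambda, Set.mem_union, Set.mem_ofPred_eq, neg_mul, neg_inj]
  exact or_comm

lemma ne_zero_of_mem_Lambda (hq : q ≠ 0) (hzm : zm ≠ 0) (hzp : zp ≠ 0)
    (hx : x ∈ Lambda q zm zp) : x ≠ 0 := by
  rcases hx with ⟨m, rfl⟩ | ⟨m, rfl⟩
  · exact mul_ne_zero hzm (zpow_ne_zero m hq)
  · exact mul_ne_zero hzp (zpow_ne_zero m hq)

lemma exists_eq_mul_zpow_of_mem_Lambda_of_pos (hq0 : 0 < q) (hzm : zm ≤ 0)
    (hx : x ∈ Lambda q zm zp) (hx0 : 0 < x) : ∃ m : ℤ, x = zp * q ^ m := by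
  refine hx.resolve_left ?_
  rintro ⟨m, rfl⟩
  exact hx0.not_ge (mul_nonpos_of_nonpos_of_nonneg hzm (zpow_nonneg hq0.le m))

lemma qRay_eq_Ioc_inter_Lambda (hq0 : 0 < q) (hq1 : q < 1) (hzm : zm ≤ 0)
    (hx : x ∈ Lambda q zm zp) (hx0 : 0 < x) : qRay q x = Set.Ioc 0 x ∩ Lambda q zm zp := by
  obtain ⟨m, rfl⟩ := exists_eq_mul_zpow_of_mem_Lambda_of_pos hq0 hzm hx hx0
  have hzp : 0 < zp := pos_of_mul_pos_left hx0 (zpow_nonneg hq0.le m)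
  have le_iff (k : ℤ) : zp * q ^ k ≤ zp * q ^ m ↔ m ≤ k := by
    rw [mul_le_mul_iff_right₀ hzp, zpow_le_zpow_iff_right_of_lt_one₀ hq0 hq1]
  rw [qRay_mul_zpow hq0.ne']
  ext c
  constructor
  · rintro ⟨k, hmk, rfl⟩
    exact ⟨⟨mul_pos hzp (zpow_pos hq0 k), (le_iff k).2 hmk⟩, Or.inr ⟨k, rfl⟩⟩
  · rintro ⟨⟨hc0, hcx⟩, hc⟩
    obtain ⟨k, rfl⟩ := exists_eq_mul_zpow_of_mem_Lambda_of_pos hq0 hzm hc hc0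
    exact ⟨k, (le_iff k).1 hcx, rfl⟩

lemma qRay_eq_Ico_inter_Lambda (hq0 : 0 < q) (hq1 : q < 1) (hzp : 0 ≤ zp)
    (hx : x ∈ Lambda q zm zp) (hx0 : x < 0) : qRay q x = Set.Ico x 0 ∩ Lambda q zm zp := by
  ext c
  rw [← neg_mem_qRay_neg_iff, qRay_eq_Ioc_inter_Lambda hq0 hq1 (neg_nonpos.2 hzp)
    (neg_mem_Lambda_neg_iff.2 hx) (neg_pos.2 hx0)]
  simp only [Set.mem_inter_iff, Set.mem_Ioc, Set.mem_Ico, neg_mem_Lambda_neg_iff, neg_pos,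
    neg_le_neg_iff, and_comm]

lemma qRay_eq_union_inter_Lambda (hq0 : 0 < q) (hq1 : q < 1) (hzm : zm < 0) (hzp : 0 < zp)
    (hx : x ∈ Lambda q zm zp) :
    qRay q x = (Set.Ico x 0 ∪ Set.Ioc 0 x) ∩ Lambda q zm zp := by
  rcases (ne_zero_of_mem_Lambda hq0.ne' hzm.ne hzp.ne' hx).lt_or_gt with hx0 | hx0
  · rw [qRay_eq_Ico_inter_Lambda hq0 hq1 hzp.le hx hx0, Set.Ioc_eq_empty hx0.not_gt,
      Set.union_empty]
  · rw [qRay_eq_Ioc_inter_Lambda hq0 hq1 hzm.le hx hx0, Set.Ico_eq_empty hx0.not_gt,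
      Set.empty_union]

lemma indicator_qInterval_abs_mul (hq0 : 0 < q) (hq1 : q < 1) (hzm : zm < 0) (hzp : 0 < zp)
    (ha : a ∈ Lambda q zm zp) (hb : b ∈ Lambda q zm zp) (hab : a ≤ b) (f : ℝ → ℝ) :
    (qInterval q zm zp a b).indicator (fun c => |c| * f c) =
      (qRay q b).indicator (fun c => c * f c) - (qRay q a).indicator (fun c => c * f c) := by
  ext c
  have hc0 : c ∈ Lambda q zm zp → c ≠ 0 := ne_zero_of_mem_Lambda hq0.ne' hzm.ne hzp.ne'
  rw [Pi.sub_apply, qRay_eq_union_inter_Lambda hq0 hq1 hzm hzp ha,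
    qRay_eq_union_inter_Lambda hq0 hq1 hzm hzp hb]
  simp only [qInterval, Set.indicator_apply, Set.mem_inter_iff, Set.mem_union, Set.mem_Ico,
    Set.mem_Ioc]
  rcases lt_trichotomy c 0 with hc | rfl | hc
  · rw [abs_of_neg hc]
    split_ifs <;> grind
  · simp
  · rw [abs_of_pos hc]
    split_ifs <;> grind

lemma hasSum_qInterval_abs_mul (hq0 : 0 < q) (hq1 : q < 1) (hzm : zm < 0) (hzp : 0 < zp)
    (ha : a ∈ Lambda q zm zp) (hb : b ∈ Lambda q zm zp) (hab : a ≤ b) {f : ℝ → ℝ} {A B : ℝ}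
    (hA : HasSum (fun c : qRay q a => (c : ℝ) * f c) A)
    (hB : HasSum (fun c : qRay q b => (c : ℝ) * f c) B) :
    HasSum (fun c : qInterval q zm zp a b => |(c : ℝ)| * f c) (B - A) := by
  have hA' := hasSum_subtype_iff_indicator (f := fun c : ℝ => c * f c).1 hA
  have hB' := hasSum_subtype_iff_indicator (f := fun c : ℝ => c * f c).1 hB
  refine hasSum_subtype_iff_indicator (f := fun c : ℝ => |c| * f c).2 ?_
  rw [indicator_qInterval_abs_mul hq0 hq1 hzm hzp ha hb hab f]
  exact hB'.sub hA'

lemma hasSum_qRay_pow (hq0 : 0 < q) (hq1 : q < 1) (hx : x ≠ 0) {n : ℕ} (hn : n ≠ 0) :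
    HasSum (fun c : qRay q x => (c : ℝ) ^ n) (x ^ n / (1 - q ^ n)) := by
  have hinj : Function.Injective fun i : ℕ => x * q ^ i :=
    (mul_right_injective₀ hx).comp (pow_right_injective₀ hq0 hq1.ne)
  refine (hinj.hasSum_range_iff (f := fun c : ℝ => c ^ n)).2 ?_
  simpa only [Function.comp_def, mul_pow, pow_right_comm q _ n, div_eq_mul_inv] using
    (hasSum_geometric_of_lt_one (pow_nonneg hq0.le n) (pow_lt_one₀ hq0.le hq1 hn)).mul_left (x ^ n)

end

/-- For a < b in Λ and n ≥ 1 one has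
b^n − a^n = (1 − qⁿ) Σ_{c ∈ I(a,b)} |c| c^{n−1}, the sum converging absolutely. -/
theorem summation_lemma (q zm zp : ℝ) (hq0 : 0 < q) (hq1 : q < 1) (hzm : zm < 0)
    (hzp : 0 < zp) (a b : ℝ) (ha : a ∈ Lambda q zm zp) (hb : b ∈ Lambda q zm zp)
    (hab : a < b) (n : ℕ) (hn : 1 ≤ n) :
    Summable (fun c : ↥(qInterval q zm zp a b) => |(c : ℝ)| * (c : ℝ) ^ (n - 1)) ∧
    b ^ n - a ^ n =
      (1 - q ^ n) * ∑' c : ↥(qInterval q zm zp a b), |(c : ℝ)| * (c : ℝ) ^ (n - 1) := by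
  have hn0 : n ≠ 0 := Nat.one_le_iff_ne_zero.1 hn
  have hqn : 1 - q ^ n ≠ 0 := (sub_pos.2 (pow_lt_one₀ hq0.le hq1 hn0)).ne'
  have ray_sum {x : ℝ} (hx : x ∈ Lambda q zm zp) :
      HasSum (fun c : qRay q x => (c : ℝ) * (c : ℝ) ^ (n - 1)) (x ^ n / (1 - q ^ n)) := by
    simpa only [mul_pow_sub_one hn0] using
      hasSum_qRay_pow hq0 hq1 (ne_zero_of_mem_Lambda hq0.ne' hzm.ne hzp.ne' hx) hn0
  have interval_sum := hasSum_qInterval_abs_mul (f := fun c => c ^ (n - 1)) hq0 hq1 hzm hzp ha hb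
    hab.le (ray_sum ha) (ray_sum hb)
  refine ⟨interval_sum.summable, ?_⟩
  rw [interval_sum.tsum_eq, ← sub_div, mul_div_cancel₀ _ hqn]

end
end

section
/- If (a,b) is an admissible pair of nonzero complex numbers, then for every x ∈ Λ the quantity (ax;q)_∞ · (bx;q)_∞ is a real and strictly positive number. -/
open scoped BigOperators
open Classical

noncomputable section

/-- finite q-Pochhammer symbol (a;q)_n in ℂ. -/
def qpochC (a : ℂ) (q : ℝ) (n : ℕ) : ℂ := ∏ m ∈ Finset.range n, (1 - a * (q : ℂ) ^ m)

/-- infinite q-Pochhammer symbol (a;q)_∞ in ℂ. -/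
def qpochInf (a : ℂ) (q : ℝ) : ℂ := ∏' m : ℕ, (1 - a * (q : ℂ) ^ m)

/-- theta function θ_q(u) = (u;q)_∞ (q/u;q)_∞. -/
def thetaQ (q : ℝ) (u : ℂ) : ℂ := qpochInf u q * qpochInf ((q : ℂ) / u) q

/-- admissible pair of parameters. -/
def AdmissiblePair (q zm zp : ℝ) (a b : ℂ) : Prop :=
  a ≠ 0 ∧ b ≠ 0 ∧
    ((a.im ≠ 0 ∧ b = (starRingEnd ℂ) a) ∨
     (a.im = 0 ∧ b.im = 0 ∧
       ∃ s t : ℝ, s ∈ Lambda q zm zp ∧ t ∈ Lambda q zm zp ∧ s < t ∧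
         (∀ u ∈ Lambda q zm zp, ¬ (s < u ∧ u < t)) ∧
         a⁻¹.re ∈ Set.Ioo s t ∧ b⁻¹.re ∈ Set.Ioo s t))

/-- admissible nondegenerate quadruple: (α,β), (γ,δ) admissible pairs and γδq > αβ. -/
def AdmissibleNondeg (q zm zp : ℝ) (al be ga de : ℂ) : Prop :=
  AdmissiblePair q zm zp al be ∧ AdmissiblePair q zm zp ga de ∧
    (al * be).re < (ga * de).re * q

/-- the weight w(x; a,b,c,d) = |x| (ax;q)_∞(bx;q)_∞ / ((cx;q)_∞(dx;q)_∞). -/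
def weightC (q : ℝ) (a b c d : ℂ) (x : ℝ) : ℂ :=
  (|x| : ℝ) * (qpochInf (a * x) q * qpochInf (b * x) q) /
    (qpochInf (c * x) q * qpochInf (d * x) q)

/-- pseudo big q-Jacobi polynomial P_n(x; a,b,c,d). -/
def pbqJ (q : ℝ) (a b c d : ℂ) (n : ℕ) (x : ℂ) : ℂ :=
  ∑ k ∈ Finset.range (n + 1),
    qpochC ((q : ℂ) ^ (-(n : ℤ))) q k * qpochC (c * d * (q : ℂ) ^ ((n : ℤ) + 1) / (a * b)) q k *
        qpochC (c * x) q k /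
      (qpochC (c * (q : ℂ) / b) q k * qpochC (c * (q : ℂ) / a) q k * qpochC (q : ℂ) q k) *
      (q : ℂ) ^ k

/-- leading coefficient k_n(a,b,c,d) of P_n. -/
def kCoeff (q : ℝ) (a b c d : ℂ) (n : ℕ) : ℂ :=
  c ^ n * qpochC (c * d * (q : ℂ) ^ ((n : ℤ) + 1) / (a * b)) q n /
    (qpochC (c * (q : ℂ) / b) q n * qpochC (c * (q : ℂ) / a) q n)

/-- the q-hypergeometric series ₂φ₁(A,B;C;q,Z). -/
def phi21 (q : ℝ) (A B C Z : ℂ) : ℂ :=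
  ∑' m : ℕ, qpochC A q m * qpochC B q m / (qpochC C q m * qpochC (q : ℂ) q m) * Z ^ m

/-- principal branch square root. -/
def csqrt (z : ℂ) : ℂ := z ^ (1 / 2 : ℂ)

/-!
The product of the two infinite products is the infinite product of
`(1 - a x qᵐ) (1 - b x qᵐ)`, and it does not vanish when no factor does. So it is enough that
`(1 - a y) (1 - b y) > 0` at every point `y` of the lattice, which is stable under multiplication
by `q`. For `b = ā` this is `|1 - a y|² > 0`. For real `a` and `b` the product is
`(a⁻¹ - y) (b⁻¹ - y)` divided by the value of this expression at `y = 0`. Both are positive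
because neither `y` nor `0` separates `a⁻¹` from `b⁻¹`: a gap `(s, t)` around `0` would contain the
lattice point `s q²`.
-/

open scoped ComplexOrder ComplexConjugate
open Set

section Gaps

variable {R : Type*} [Ring R] [LinearOrder R] [IsStrictOrderedRing R] {s t u v y : R}

theorem sub_mul_sub_pos_of_mem_Ioo (hu : u ∈ Ioo s t) (hv : v ∈ Ioo s t) (hy : y ∉ Ioo s t) :
    0 < (u - y) * (v - y) := by
  rcases le_or_gt y s with hys | hsy
  · exact mul_pos (sub_pos.2 (hys.trans_lt hu.1)) (sub_pos.2 (hys.trans_lt hv.1))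
  · have hty : t ≤ y := not_lt.1 fun hyt => hy ⟨hsy, hyt⟩
    exact mul_pos_of_neg_of_neg (sub_neg.2 (hu.2.trans_le hty)) (sub_neg.2 (hv.2.trans_le hty))

theorem zero_notMem_Ioo_of_mul_mem {S : Set R} {r : R} (hr0 : 0 ≤ r) (hr1 : r < 1)
    (hS : ∀ x ∈ S, x * r ∈ S) (hs : s ∈ S) (hgap : ∀ x ∈ S, x ∉ Ioo s t) : 0 ∉ Ioo s t := by
  rintro ⟨hs0, h0t⟩
  have hsr : s < s * r := lt_mul_of_lt_one_right hs0 hr1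
  have hrt : s * r < t := (mul_nonpos_of_nonpos_of_nonneg hs0.le hr0).trans_lt h0t
  exact hgap (s * r) (hS s hs) ⟨hsr, hrt⟩

end Gaps

theorem one_sub_mul_mul_one_sub_mul_pos_of_inv_mem_Ioo {K : Type*} [Field K] [LinearOrder K]
    [IsStrictOrderedRing K] {a b s t y : K} (ha : a⁻¹ ∈ Ioo s t) (hb : b⁻¹ ∈ Ioo s t)
    (h0 : 0 ∉ Ioo s t) (hy : y ∉ Ioo s t) : 0 < (1 - a * y) * (1 - b * y) := by
  have h_at_zero : 0 < a⁻¹ * b⁻¹ := by simpa using sub_mul_sub_pos_of_mem_Ioo ha hb h0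
  have h_at_y : 0 < (a⁻¹ - y) * (b⁻¹ - y) := sub_mul_sub_pos_of_mem_Ioo ha hb hy
  have ha0 : a ≠ 0 := mt inv_eq_zero.2 (left_ne_zero_of_mul h_at_zero.ne')
  have hb0 : b ≠ 0 := mt inv_eq_zero.2 (right_ne_zero_of_mul h_at_zero.ne')
  calc
    0 < (a⁻¹ - y) * (b⁻¹ - y) / (a⁻¹ * b⁻¹) := div_pos h_at_y h_at_zero
    _ = (1 - a * y) * (1 - b * y) := by field_simp

theorem one_sub_mul_mul_one_sub_conj_mul_pos {a : ℂ} (ha : a.im ≠ 0) (y : ℝ) :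
    0 < (1 - a * y) * (1 - conj a * y) := by
  have hne : 1 - a * y ≠ 0 := by
    intro h
    have hy : y = 0 := by simpa [ha] using congrArg Complex.im h
    simp [hy] at h
  simpa using mul_star_self_pos (.of_ne_zero hne)

theorem tprod_one_add_mul_tprod_one_add_pos {ι 𝕜 : Type*} [RCLike 𝕜] {f g : ι → 𝕜}
    (hf : Summable fun i => ‖f i‖) (hg : Summable fun i => ‖g i‖)
    (hpos : ∀ i, 0 < (1 + f i) * (1 + g i)) :
    0 < (∏' i, (1 + f i)) * ∏' i, (1 + g i) := by
  have hprod : HasProd (fun i => (1 + f i) * (1 + g i)) ((∏' i, (1 + f i)) * ∏' i, (1 + g i)) :=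
    (multipliable_one_add_of_summable hf).hasProd.mul (multipliable_one_add_of_summable hg).hasProd
  have hne : (∏' i, (1 + f i)) * ∏' i, (1 + g i) ≠ 0 :=
    mul_ne_zero
      (tprod_one_add_ne_zero_of_summable (fun i => left_ne_zero_of_mul (hpos i).ne') hf)
      (tprod_one_add_ne_zero_of_summable (fun i => right_ne_zero_of_mul (hpos i).ne') hg)
  exact (hprod.nonneg fun i => (hpos i).le).lt_of_ne' hne

theorem qpochInf_mul_qpochInf_pos {q : ℝ} (hq : |q| < 1) {c d : ℂ}
    (hpos : ∀ m : ℕ, 0 < (1 - c * (q : ℂ) ^ m) * (1 - d * (q : ℂ) ^ m)) :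
    0 < qpochInf c q * qpochInf d q := by
  have hsum (e : ℂ) : Summable fun m : ℕ => ‖-(e * (q : ℂ) ^ m)‖ := by
    simpa using (summable_geometric_of_lt_one (abs_nonneg q) hq).mul_left ‖e‖
  simp only [qpochInf, sub_eq_add_neg] at hpos ⊢
  exact tprod_one_add_mul_tprod_one_add_pos (hsum c) (hsum d) hpos

section Lattice

variable {q zm zp : ℝ}

theorem mul_pow_mem_Lambda (hq : q ≠ 0) {x : ℝ} (hx : x ∈ Lambda q zm zp) (m : ℕ) :
    x * q ^ m ∈ Lambda q zm zp := by
  rcases hx with ⟨k, rfl⟩ | ⟨k, rfl⟩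
  · exact Or.inl ⟨k + m, by rw [zpow_add₀ hq, zpow_natCast, mul_assoc]⟩
  · exact Or.inr ⟨k + m, by rw [zpow_add₀ hq, zpow_natCast, mul_assoc]⟩

theorem AdmissiblePair.one_sub_mul_mul_one_sub_mul_pos (hq0 : q ≠ 0) (hq1 : |q| < 1) {a b : ℂ}
    (hab : AdmissiblePair q zm zp a b) {y : ℝ} (hy : y ∈ Lambda q zm zp) :
    0 < (1 - a * y) * (1 - b * y) := by
  obtain ⟨-, -, ⟨ha, rfl⟩ | ⟨ha, hb, s, t, hs, -, -, hgap, has, hbs⟩⟩ := hab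
  · exact one_sub_mul_mul_one_sub_conj_mul_pos ha y
  · lift a to ℝ using ha
    lift b to ℝ using hb
    have h0 : 0 ∉ Ioo s t :=
      zero_notMem_Ioo_of_mul_mem (sq_nonneg q) ((sq_lt_one_iff_abs_lt_one q).2 hq1)
        (fun x hx => mul_pow_mem_Lambda hq0 hx 2) hs hgap
    norm_cast at has hbs ⊢
    exact one_sub_mul_mul_one_sub_mul_pos_of_inv_mem_Ioo has hbs h0 (hgap y hy)

end Lattice

theorem admissible_pair_positive_general (q zm zp : ℝ) (hq0 : q ≠ 0) (hq1 : |q| < 1) (a b : ℂ)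
    (hab : AdmissiblePair q zm zp a b) (x : ℝ) (hx : x ∈ Lambda q zm zp) :
    ∃ r : ℝ, 0 < r ∧ qpochInf (a * x) q * qpochInf (b * x) q = (r : ℂ) := by
  have hpos : 0 < qpochInf (a * x) q * qpochInf (b * x) q := by
    refine qpochInf_mul_qpochInf_pos hq1 fun m => ?_
    simpa [mul_assoc] using
      hab.one_sub_mul_mul_one_sub_mul_pos hq0 hq1 (mul_pow_mem_Lambda hq0 hx m)
  obtain ⟨r, hr, hrx⟩ := RCLike.pos_iff_exists_ofReal.1 hpos
  exact ⟨r, hr, hrx.symm⟩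

/-- For an admissible pair (a,b) and any x ∈ Λ, the quantity (ax;q)_∞ (bx;q)_∞ is real
and strictly positive. -/
theorem admissible_pair_positive (q zm zp : ℝ) (hq0 : 0 < q) (hq1 : q < 1) (hzm : zm < 0)
    (hzp : 0 < zp) (a b : ℂ) (hab : AdmissiblePair q zm zp a b)
    (x : ℝ) (hx : x ∈ Lambda q zm zp) :
    ∃ r : ℝ, 0 < r ∧ qpochInf (a * x) q * qpochInf (b * x) q = (r : ℂ) := by
  exact admissible_pair_positive_general q zm zp hq0.ne' (by rwa [abs_of_pos hq0]) a b hab x hx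

end
end
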